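/- Suppose the invertible RDS φ on 𝕊¹ is contractible and admits a reverse-stationary probability measure ρ that is atomless and has full support. Then for any connected set J⊆𝕊¹, ℙ(ω : l(φ(t,ω)J)→0 as t→∞) = 1−ρ(J). -/

import Mathlib

open MeasureTheory Filter Topology Set ENNReal

noncomputable section

/-- The natural projection `π : ℝ → 𝕊¹ = ℝ/ℤ`. -/
def circleProj (x : ℝ) : UnitAddCircle := (x : UnitAddCircle)

/-- `f` is an orientation-preserving homeomorphism of the circle: it admits a strictly
monotone degree-one lift. -/
def OrientPreserving (f : UnitAddCircle ≃ₜ UnitAddCircle) : Prop :=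
  ∃ F : ℝ → ℝ, StrictMono F ∧ (∀ x : ℝ, F (x + 1) = F x + 1) ∧
    ∀ x : ℝ, f (circleProj x) = circleProj (F x)

/-- The anticlockwise distance `d₊(x,y) = min {r ≥ 0 : π(x' + r) = y}` (`x'` any lift of `x`). -/
def dPlus (x y : UnitAddCircle) : ℝ :=
  sInf {r : ℝ | 0 ≤ r ∧ ∃ x' : ℝ, circleProj x' = x ∧ circleProj (x' + r) = y}

/-- An invertible random dynamical system on the circle, in discrete or continuous time,
driven by a stationary memoryless noise process. -/
structure RDS (Ω : Type) [m : MeasurableSpace Ω] where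
  /-- the time set `𝕋⁺`: either `ℕ ∪ {0}` or `[0,∞)`, viewed inside `ℝ` -/
  T : Set ℝ
  T_cases : T = Set.range (fun n : ℕ => (n : ℝ)) ∨ T = Set.Ici (0 : ℝ)
  /-- the filtration -/
  F : ℝ → MeasurableSpace Ω
  F_le : ∀ t ∈ T, F t ≤ m
  F_mono : ∀ s ∈ T, ∀ t ∈ T, s ≤ t → F s ≤ F t
  /-- the probability measure -/
  P : Measure Ω
  P_prob : IsProbabilityMeasure P
  /-- the time-shift maps on the noise space -/
  θ : ℝ → Ω → Ω
  θ_zero : θ 0 = id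
  θ_add : ∀ s ∈ T, ∀ t ∈ T, θ (s + t) = θ t ∘ θ s
  θ_preserving : ∀ t ∈ T, MeasurePreserving (θ t) P P
  θ_adapted : ∀ s ∈ T, ∀ t ∈ T, @Measurable Ω Ω (F (s + t)) (F s) (θ t)
  θ_indep : ∀ t ∈ T, ∀ E A : Set Ω, MeasurableSet[F t] E →
    MeasurableSet[⨆ s ∈ T, F s] A → P (E ∩ θ t ⁻¹' A) = P E * P A
  /-- the random homeomorphisms -/
  φ : ℝ → Ω → UnitAddCircle ≃ₜ UnitAddCircle
  φ_orient : ∀ t ∈ T, ∀ ω, OrientPreserving (φ t ω)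
  φ_meas : ∀ t ∈ T, @Measurable (Ω × UnitAddCircle) UnitAddCircle
    ((F t).prod inferInstance) inferInstance (fun p => φ t p.1 p.2)
  φ_zero : ∀ ω, φ 0 ω = Homeomorph.refl UnitAddCircle
  φ_cocycle : ∀ s ∈ T, ∀ t ∈ T, ∀ ω x, φ (s + t) ω x = φ t (θ s ω) (φ s ω x)
  φ_cadlag_right : ∀ ω, ∀ t ∈ T, ∀ tn : ℕ → ℝ, (∀ n, tn n ∈ T) → Antitone tn →
    Tendsto tn atTop (𝓝 t) → ∀ (xn : ℕ → UnitAddCircle) (x : UnitAddCircle),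
      Tendsto xn atTop (𝓝 x) →
      Tendsto (fun n => φ (tn n) ω (xn n)) atTop (𝓝 (φ t ω x))
  /-- the left-limit maps -/
  φ_left_lim : ℝ → Ω → UnitAddCircle → UnitAddCircle
  φ_cadlag_left : ∀ ω, ∀ t ∈ T, ∀ tn : ℕ → ℝ, (∀ n, tn n ∈ T) → StrictMono tn →
    Tendsto tn atTop (𝓝 t) → ∀ (xn : ℕ → UnitAddCircle) (x : UnitAddCircle),
      Tendsto xn atTop (𝓝 x) →
      Tendsto (fun n => φ (tn n) ω (xn n)) atTop (𝓝 (φ_left_lim t ω x))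

/-- A probability measure on the circle is atomless if every singleton is null. -/
def Atomless (ρ : Measure UnitAddCircle) : Prop := ∀ x, ρ {x} = 0

/-- A measure on the circle has full support. -/
def FullSupport (ρ : Measure UnitAddCircle) : Prop :=
  ∀ U : Set UnitAddCircle, IsOpen U → U.Nonempty → 0 < ρ U

/-- The (topological) support of a measure on the circle. -/
def msupport (ρ : Measure UnitAddCircle) : Set UnitAddCircle :=
  {x | ∀ U : Set UnitAddCircle, IsOpen U → x ∈ U → 0 < ρ U}

namespace RDS

variable {Ω : Type} [m : MeasurableSpace Ω] (S : RDS Ω)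

/-- the future σ-algebra `𝓕₊ = σ(𝓕_t : t ∈ 𝕋⁺)`. -/
def Fplus : MeasurableSpace Ω := ⨆ t ∈ S.T, S.F t

/-- The filter "t → ∞ along the time set 𝕋⁺". -/
def tFilter : Filter ℝ := atTop ⊓ 𝓟 S.T

/-- two-point contractibility. -/
def Contractible : Prop := ∀ x y : UnitAddCircle, x ≠ y →
  0 < S.P {ω | ∃ t ∈ S.T, dist (S.φ t ω x) (S.φ t ω y) < dist x y}

/-- compressibility. -/
def Compressible : Prop := ∀ x y : UnitAddCircle, x ≠ y →
  0 < S.P {ω | ∃ t ∈ S.T, dPlus (S.φ t ω x) (S.φ t ω y) < dPlus x y}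

/-- `p` is a deterministic fixed point. -/
def DetFixedPoint (p : UnitAddCircle) : Prop :=
  ∀ᵐ ω ∂S.P, ∀ t ∈ S.T, S.φ t ω p = p

/-- `A` is forward-invariant. -/
def ForwardInvariant (A : Set UnitAddCircle) : Prop :=
  ∀ᵐ ω ∂S.P, ∀ t ∈ S.T, ⇑(S.φ t ω) '' A ⊆ A

/-- reverse-minimal dynamics: the only open forward-invariant sets are `∅` and `𝕊¹`. -/
def ReverseMinimal : Prop :=
  ∀ A : Set UnitAddCircle, IsOpen A → S.ForwardInvariant A → A = ∅ ∨ A = Set.univ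

/-- synchronisation. -/
def Synchronising : Prop := ∀ x y : UnitAddCircle,
  S.P {ω | Tendsto (fun t => dist (S.φ t ω x) (S.φ t ω y)) S.tFilter (𝓝 0)} = 1

/-- everywhere local stability. -/
def EverywhereLocallyStable : Prop := ∀ x : UnitAddCircle,
  S.P {ω | ∃ U : Set UnitAddCircle, IsOpen U ∧ x ∈ U ∧
    Tendsto (fun t => volume (⇑(S.φ t ω) '' U)) S.tFilter (𝓝 0)} = 1

/-- stable synchronisation. -/
def StablySynchronising : Prop := S.Synchronising ∧ S.EverywhereLocallyStable

/-- `ρ` is reverse-stationary: `ρ(A) = ∫ ρ(φ(t,ω)A) ℙ(dω)` for all `t ∈ 𝕋⁺`, Borel `A`. -/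
def ReverseStationary (ρ : Measure UnitAddCircle) : Prop :=
  ∀ t ∈ S.T, ∀ A : Set UnitAddCircle, MeasurableSet A →
    ρ A = ∫⁻ ω, ρ (⇑(S.φ t ω) '' A) ∂S.P

/-- `r` is a crack point of `ω`. -/
def CrackPoint (ω : Ω) (r : UnitAddCircle) : Prop :=
  ∀ G : Set UnitAddCircle, IsClosed G → r ∉ G →
    Tendsto (fun t => volume (⇑(S.φ t ω) '' G)) S.tFilter (𝓝 0)

/-- the set of contractive sample points. -/
def Ωc : Set Ω := {ω | ∃ r, S.CrackPoint ω r}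

/-- the reverse transition probabilities `φ̄ₓᵗ(A) = ℙ(ω : φ(t,ω)⁻¹(x) ∈ A)`. -/
def revTrans (t : ℝ) (x : UnitAddCircle) (A : Set UnitAddCircle) : ℝ≥0∞ :=
  S.P {ω | (S.φ t ω).symm x ∈ A}

/-- the forward transition probabilities `φₓᵗ(A) = ℙ(ω : φ(t,ω)x ∈ A)`. -/
def fwdTrans (t : ℝ) (x : UnitAddCircle) (A : Set UnitAddCircle) : ℝ≥0∞ :=
  S.P {ω | S.φ t ω x ∈ A}

/-- `ρ` is stationary for a transition family `ν`. -/
def StationaryFor (ν : ℝ → UnitAddCircle → Set UnitAddCircle → ℝ≥0∞)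
    (ρ : Measure UnitAddCircle) : Prop :=
  ∀ t ∈ S.T, ∀ A : Set UnitAddCircle, MeasurableSet A → ρ A = ∫⁻ x, ν t x A ∂ρ

/-- `ρ` is ergodic for a transition family `ν`. -/
def ErgodicFor (ν : ℝ → UnitAddCircle → Set UnitAddCircle → ℝ≥0∞)
    (ρ : Measure UnitAddCircle) : Prop :=
  S.StationaryFor ν ρ ∧ ∀ A : Set UnitAddCircle, MeasurableSet A →
    (∀ t ∈ S.T, ∀ᵐ x ∂ρ, x ∈ A → ν t x A = 1) → ρ A = 0 ∨ ρ A = 1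

end RDS

/-!
For a pair `z = (x, y)` let `u z` be the `ρ`-mass of the open arc from `x` to `y`. Reverse
stationarity makes `u` harmonic for the two-point motion `Φ`, and since `u (x, y) + u (y, x) = 1`
off the diagonal, the product `v (x, y) = u (x, y) u (y, x)` is superharmonic. It is continuous and
vanishes on the diagonal, so contractibility forces `𝔼 v (Φ_t z) → 0` by a maximum principle for the
limit, and the maximal inequality for supermartingales upgrades this to `v (Φ_t z) → 0` almost
surely. Hence almost surely either `u (Φ_t z) → 0` or `u (Φ_t z)` comes arbitrarily close to `1`;
the maximal inequality for `u` bounds the probabilities of these events by `u (y, x) = 1 - u z` and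
`u z` respectively, so both bounds are equalities. Finally the `ρ`-mass of an arc is small exactly
when its length is.
-/

/-! ### Arcs of the circle -/

section CircularOrder

variable {α : Type*} [CircularOrder α] {x y z w : α}

theorem ne_of_sbtw (h : sbtw x z y) : x ≠ z ∧ z ≠ y ∧ y ≠ x := by
  refine ⟨?_, ?_, ?_⟩ <;> rintro rfl
  exacts [sbtw_irrefl_left h, sbtw_irrefl_right h, sbtw_irrefl_left_right h]

theorem sbtw_or_sbtw_of_ne (hxz : x ≠ z) (hzy : z ≠ y) (hyx : y ≠ x) :
    sbtw x z y ∨ sbtw y z x := by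
  simp only [sbtw_iff_not_btw, ← not_and_or]
  intro h
  rcases btw_antisymm h.1 h.2 with h | h | h
  exacts [hzy h.symm, hxz h.symm, hyx h.symm]

theorem disjoint_cIoo_cIoo_swap (x y : α) : Disjoint (cIoo x y) (cIoo y x) :=
  disjoint_left.2 fun _ => sbtw_asymm

theorem cIoo_union_cIoo_swap (hxy : x ≠ y) : cIoo x y ∪ cIoo y x = {x, y}ᶜ := by
  ext z
  simp only [mem_union, mem_cIoo, mem_compl_iff, mem_insert_iff, mem_singleton_iff, not_or]
  constructor
  · rintro (h | h)
    · exact ⟨(ne_of_sbtw h).1.symm, (ne_of_sbtw h).2.1⟩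
    · exact ⟨(ne_of_sbtw h).2.1, (ne_of_sbtw h).1.symm⟩
  · exact fun h => sbtw_or_sbtw_of_ne (Ne.symm h.1) h.2 hxy.symm

theorem cIoo_subset_cIoo_of_sbtw (hzw : sbtw x z w) (hwy : sbtw x w y) :
    cIoo z w ⊆ cIoo x y := by
  intro v hv
  have hxv : sbtw w x v := (sbtw_cyclic_right hzw).trans_right (sbtw_cyclic_right hv)
  exact (sbtw_cyclic_left hxv).trans_right hwy

theorem cIoo_subset_or_cIoo_subset (hz : z ∈ cIoo x y) (hw : w ∈ cIoo x y) (hzw : z ≠ w) :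
    cIoo z w ⊆ cIoo x y ∨ cIoo w z ⊆ cIoo x y := by
  rcases sbtw_or_sbtw_of_ne (ne_of_sbtw hz).1 hzw (ne_of_sbtw hw).1.symm with h | h
  · exact .inl (cIoo_subset_cIoo_of_sbtw h hw)
  · exact .inr (cIoo_subset_cIoo_of_sbtw (sbtw_cyclic_left (sbtw_cyclic_left h)) hz)

theorem cIoo_self (x : α) : cIoo x x = ∅ :=
  eq_empty_of_forall_notMem fun _ => sbtw_irrefl_left_right

theorem cIoo_subset_or_cIoo_swap_subset (hz : z ∈ cIoo x y) (hw : w ∈ cIoo x y) :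
    cIoo z w ⊆ cIoo x y ∨ cIoo y x ⊆ cIoo z w := by
  rcases eq_or_ne z w with rfl | hzw
  · exact .inl (by simp [cIoo_self])
  refine (cIoo_subset_or_cIoo_subset hz hw hzw).imp_right fun hwz v hv => ?_
  have hv_not : v ∉ cIoo x y := disjoint_right.1 (disjoint_cIoo_cIoo_swap x y) hv
  have hv_zw : v ∈ cIoo z w ∪ cIoo w z := by
    rw [cIoo_union_cIoo_swap hzw]
    rintro (rfl | rfl)
    exacts [hv_not hz, hv_not hw]
  exact hv_zw.resolve_right fun h => hv_not (hwz h)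

end CircularOrder

section AddCircle

variable {p : ℝ} [hp : Fact (0 < p)]

theorem sbtw_coe_iff {a b c : ℝ} :
    sbtw (a : AddCircle p) c b ↔ toIocMod hp.out a c < toIcoMod hp.out a b := by
  rw [sbtw_iff_not_btw, btw_cyclic, QuotientAddGroup.btw_coe_iff, not_le]

theorem sbtw_coe_of_lt {a b c : ℝ} (hac : a < c) (hcb : c < b) (hba : b < a + p) :
    sbtw (a : AddCircle p) c b := by
  rwa [sbtw_coe_iff, (toIocMod_eq_self _).2 ⟨hac, (hcb.trans hba).le⟩,
    (toIcoMod_eq_self _).2 ⟨(hac.trans hcb).le, hba⟩]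

theorem coe_toIocMod (a c : ℝ) : ((toIocMod hp.out a c : ℝ) : AddCircle p) = c :=
  AddCircle.coe_equivIoc (y := (c : AddCircle p))

theorem coe_toIcoMod (a c : ℝ) : ((toIcoMod hp.out a c : ℝ) : AddCircle p) = c :=
  AddCircle.coe_equivIco (y := (c : AddCircle p))

theorem sbtw_iff_exists_lift {x y z : AddCircle p} :
    sbtw x z y ↔
      ∃ a c b : ℝ, (a < c ∧ c < b ∧ b < a + p) ∧ (a : AddCircle p) = x ∧ c = z ∧ b = y := by
  constructor
  · induction x using QuotientAddGroup.induction_on with | H a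
    induction y using QuotientAddGroup.induction_on with | H b
    induction z using QuotientAddGroup.induction_on with | H c
    intro h
    refine ⟨a, toIocMod hp.out a c, toIcoMod hp.out a b,
      ⟨left_lt_toIocMod _ _ _, sbtw_coe_iff.1 h, toIcoMod_lt_right _ _ _⟩, rfl, ?_, ?_⟩
    exacts [coe_toIocMod a c, coe_toIcoMod a b]
  · rintro ⟨a, c, b, ⟨hac, hcb, hba⟩, rfl, rfl, rfl⟩
    exact sbtw_coe_of_lt hac hcb hba

theorem image_coe_Ioo {a b : ℝ} (hab : a ≤ b) (hba : b < a + p) :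
    ((↑) : ℝ → AddCircle p) '' Ioo a b = cIoo (a : AddCircle p) b := by
  ext z
  constructor
  · rintro ⟨c, hc, rfl⟩
    exact sbtw_coe_of_lt hc.1 hc.2 hba
  · induction z using QuotientAddGroup.induction_on with | H c
    intro h
    rw [mem_cIoo, sbtw_coe_iff, (toIcoMod_eq_self _).2 ⟨hab, hba⟩] at h
    exact ⟨toIocMod hp.out a c, ⟨left_lt_toIocMod _ _ _, h⟩, coe_toIocMod a c⟩

theorem isOpen_setOf_sbtw :
    IsOpen {t : AddCircle p × AddCircle p × AddCircle p | sbtw t.1 t.2.1 t.2.2} := by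
  have hcoe : IsOpenMap ((↑) : ℝ → AddCircle p) := QuotientAddGroup.isOpenMap_coe
  have hopen : IsOpen {t : ℝ × ℝ × ℝ | t.1 < t.2.1 ∧ t.2.1 < t.2.2 ∧ t.2.2 < t.1 + p} := by
    simp only [ofPred_and]
    refine .inter ?_ (.inter ?_ ?_) <;> exact isOpen_lt (by fun_prop) (by fun_prop)
  convert (hcoe.prodMap (hcoe.prodMap hcoe)) _ hopen using 1
  ext ⟨x, z, y⟩
  simp [sbtw_iff_exists_lift]

theorem isOpen_cIoo (x y : AddCircle p) : IsOpen (cIoo x y) :=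
  isOpen_setOf_sbtw.preimage (f := fun z => (x, z, y)) (by fun_prop)

theorem exists_lift_of_ne {x y : AddCircle p} (hxy : x ≠ y) :
    ∃ a b : ℝ, (a < b ∧ b < a + p) ∧ (a : AddCircle p) = x ∧ b = y := by
  induction x using QuotientAddGroup.induction_on with | H a
  induction y using QuotientAddGroup.induction_on with | H b
  refine ⟨a, toIcoMod hp.out a b, ⟨(left_le_toIcoMod _ _ _).lt_of_ne fun h => hxy ?_,
    toIcoMod_lt_right _ _ _⟩, rfl, coe_toIcoMod a b⟩
  exact (congrArg _ h).trans (coe_toIcoMod a b)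

theorem nonempty_cIoo {x y : AddCircle p} (hxy : x ≠ y) : (cIoo x y).Nonempty := by
  obtain ⟨a, b, ⟨hab, hba⟩, rfl, rfl⟩ := exists_lift_of_ne hxy
  rw [← image_coe_Ioo hab.le hba]
  exact (nonempty_Ioo.2 hab).image _

theorem exists_lift_of_isPreconnected {J : Set (AddCircle p)} (hJ : IsPreconnected J) :
    ∃ a b : ℝ, (a ≤ b ∧ b ≤ a + p) ∧ (↑) '' Ioo a b ⊆ J ∧ J ⊆ (↑) '' Icc a b := by
  rcases J.eq_empty_or_nonempty with rfl | hJne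
  · exact ⟨0, 0, ⟨le_rfl, by simpa using hp.out.le⟩, by simp⟩
  by_cases hJuniv : J = univ
  · refine ⟨0, 0 + p, ⟨by simpa using hp.out.le, le_rfl⟩, by simp [hJuniv], ?_⟩
    simp only [AddCircle.coe_image_Icc_eq, subset_univ]
  obtain ⟨q, hq⟩ := (ne_univ_iff_exists_notMem J).1 hJuniv
  induction q using QuotientAddGroup.induction_on with | H q
  let c : AddCircle p → ℝ := fun z => AddCircle.equivIco p q z
  have hc : ContinuousOn c J := fun z hz =>
    (continuous_subtype_val.continuousAt.comp (AddCircle.continuousAt_equivIco p q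
      (ne_of_mem_of_not_mem hz hq))).continuousWithinAt
  have hcoe : ∀ z, (c z : AddCircle p) = z := fun z => AddCircle.coe_equivIco
  have hJ_eq : (↑) '' (c '' J) = J := by simp [image_image, hcoe]
  have hI : IsConnected (c '' J) := ⟨hJne.image c, hJ.image c hc⟩
  have hI_sub : c '' J ⊆ Ico q (q + p) := image_subset_iff.2 fun z _ => (AddCircle.equivIco p q z).2
  have hbelow : BddBelow (c '' J) := bddBelow_Ico.mono hI_sub
  have habove : BddAbove (c '' J) := bddAbove_Ico.mono hI_sub
  have hq_le : q ≤ sInf (c '' J) := le_csInf hI.nonempty fun _ h => (hI_sub h).1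
  have hle_q : sSup (c '' J) ≤ q + p := csSup_le hI.nonempty fun _ h => (hI_sub h).2.le
  refine ⟨sInf (c '' J), sSup (c '' J), ⟨csInf_le_csSup hI.nonempty hbelow habove, by linarith⟩,
    ?_, ?_⟩
  · exact (image_mono (hI.Ioo_csInf_csSup_subset hbelow habove)).trans hJ_eq.subset
  · exact hJ_eq.superset.trans (image_mono (subset_Icc_csInf_csSup hbelow habove))

end AddCircle

namespace OrientPreserving

variable {f : UnitAddCircle ≃ₜ UnitAddCircle} {x y z : UnitAddCircle}

theorem sbtw_map (hf : OrientPreserving f) (h : sbtw x z y) : sbtw (f x) (f z) (f y) := by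
  obtain ⟨F, hF, hF_add, hfF⟩ := hf
  obtain ⟨a, c, b, ⟨hac, hcb, hba⟩, rfl, rfl, rfl⟩ := sbtw_iff_exists_lift.1 h
  change sbtw (f (circleProj a)) (f (circleProj c)) (f (circleProj b))
  simp only [hfF]
  exact sbtw_coe_of_lt (hF hac) (hF hcb) (hF_add a ▸ hF hba)

theorem image_cIoo (hf : OrientPreserving f) (x y : UnitAddCircle) :
    f '' cIoo x y = cIoo (f x) (f y) := by
  refine Subset.antisymm (image_subset_iff.2 fun z => hf.sbtw_map) fun w hw => ?_
  obtain ⟨z, rfl⟩ := f.surjective w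
  obtain ⟨hxz, hzy, hyx⟩ := ne_of_sbtw (mem_cIoo.1 hw)
  have h_not : ¬sbtw y z x := fun h => sbtw_asymm (hf.sbtw_map h) hw
  exact mem_image_of_mem f ((sbtw_or_sbtw_of_ne (ne_of_apply_ne f hxz) (ne_of_apply_ne f hzy)
    (ne_of_apply_ne f hyx)).resolve_right h_not)

end OrientPreserving

/-! ### The mass of an arc -/

theorem lowerSemicontinuous_measure_prodMk_left {X Y : Type*} [TopologicalSpace X]
    [TopologicalSpace Y] [MeasurableSpace Y] (μ : Measure Y) [μ.Regular] {U : Set (X × Y)}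
    (hU : IsOpen U) : LowerSemicontinuous fun x => μ (Prod.mk x ⁻¹' U) := by
  intro x η hη
  obtain ⟨K, hKU, hK, hηK⟩ := (hU.preimage (by fun_prop)).exists_lt_isCompact hη
  have hnear : ∀ᶠ x' in 𝓝 x, ∀ y ∈ K, (x', y) ∈ U :=
    hK.eventually_forall_of_forall_eventually fun y hy => hU.mem_nhds (hKU hy)
  filter_upwards [hnear] with x' hx'
  exact hηK.trans_le (measure_mono hx')

section ArcMass

variable {p : ℝ} [hp : Fact (0 < p)]

theorem exists_cIoo_subset_of_mem_nhds {x : AddCircle p} {U : Set (AddCircle p)} (hU : U ∈ 𝓝 x) :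
    ∃ a b, x ∈ cIoo a b ∧ cIoo a b ⊆ U := by
  induction x using QuotientAddGroup.induction_on with | H c
  have hU' : ((↑) : ℝ → AddCircle p) ⁻¹' U ∈ 𝓝 c :=
    (AddCircle.continuous_mk' p).continuousAt.preimage_mem_nhds hU
  have hshort : Ioo (c - p / 3) (c + p / 3) ∈ 𝓝 c :=
    Ioo_mem_nhds (by linarith [hp.out]) (by linarith [hp.out])
  obtain ⟨a, b, hc, hab⟩ := mem_nhds_iff_exists_Ioo_subset.1 (inter_mem hU' hshort)
  obtain ⟨hU'', hshort'⟩ := subset_inter_iff.1 hab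
  obtain ⟨ha, hb⟩ := (Ioo_subset_Ioo_iff (hc.1.trans hc.2)).1 hshort'
  have hba : b < a + p := by linarith [hp.out]
  refine ⟨a, b, sbtw_coe_of_lt hc.1 hc.2 hba, ?_⟩
  rw [← image_coe_Ioo (hc.1.trans hc.2).le hba]
  exact image_subset_iff.2 hU''

/-- The `ρ`-mass of the open arc running anticlockwise from `z.1` to `z.2`; it vanishes when
`z.1 = z.2`. -/
def arcMass (ρ : Measure (AddCircle p)) (z : AddCircle p × AddCircle p) : ℝ≥0∞ :=
  ρ (cIoo z.1 z.2)

/-- The product of the masses of the two arcs with endpoints `z.1` and `z.2`: the probability that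
two independent `ρ`-distributed points separate `z.1` from `z.2`, in this order. -/
def separation (ρ : Measure (AddCircle p)) (z : AddCircle p × AddCircle p) : ℝ≥0∞ :=
  arcMass ρ z * arcMass ρ z.swap

variable (ρ : Measure (AddCircle p))

theorem arcMass_diag (x : AddCircle p) : arcMass ρ (x, x) = 0 := by
  simp [arcMass, cIoo_self]

theorem separation_diag (x : AddCircle p) : separation ρ (x, x) = 0 := by
  simp [separation, arcMass_diag]

theorem arcMass_pos [ρ.IsOpenPosMeasure] {z : AddCircle p × AddCircle p} (hz : z.1 ≠ z.2) :
    0 < arcMass ρ z :=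
  (isOpen_cIoo z.1 z.2).measure_pos ρ (nonempty_cIoo hz)

theorem lowerSemicontinuous_arcMass [ρ.Regular] : LowerSemicontinuous (arcMass ρ) :=
  lowerSemicontinuous_measure_prodMk_left ρ
    (U := {q : (AddCircle p × AddCircle p) × AddCircle p | sbtw q.1.1 q.2 q.1.2})
    (isOpen_setOf_sbtw.preimage
      (f := fun q : (AddCircle p × AddCircle p) × AddCircle p => (q.1.1, q.2, q.1.2))
      (by fun_prop))

theorem exists_cIoo_measure_lt [IsFiniteMeasure ρ] [NullSingletonClass ρ] (x : AddCircle p)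
    {ε : ℝ≥0∞} (hε : 0 < ε) : ∃ a b, x ∈ cIoo a b ∧ ρ (cIoo a b) < ε := by
  obtain ⟨U, hxU, hU, hUε⟩ := ({x} : Set (AddCircle p)).exists_isOpen_lt_of_lt (μ := ρ) ε (by simpa)
  obtain ⟨a, b, hx, hab⟩ := exists_cIoo_subset_of_mem_nhds (hU.mem_nhds (hxU rfl))
  exact ⟨a, b, hx, (measure_mono hab).trans_lt hUε⟩

theorem eventually_mem_cIoo {x a b : AddCircle p} (hx : x ∈ cIoo a b) :
    ∀ᶠ z in 𝓝 (x, x), z.1 ∈ cIoo a b ∧ z.2 ∈ cIoo a b :=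
  prod_mem_nhds ((isOpen_cIoo a b).mem_nhds hx) ((isOpen_cIoo a b).mem_nhds hx)

/- An ultrafilter on pairs along which the `μ`-mass tends to zero converges to a diagonal point
`(x, x)`, and a short arc near `x` has small `ρ`-mass; the complementary long arcs are excluded
because their `μ`-mass stays away from zero. -/
theorem tendsto_arcMass_comap (μ : Measure (AddCircle p)) [μ.Regular] [μ.IsOpenPosMeasure]
    [IsFiniteMeasure ρ] [NullSingletonClass ρ] :
    Tendsto (arcMass ρ) (comap (arcMass μ) (𝓝 0)) (𝓝 0) := by
  rw [tendsto_iff_ultrafilter]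
  intro 𝒰 h𝒰
  have hμ : Tendsto (arcMass μ) 𝒰 (𝓝 0) := tendsto_iff_comap.2 h𝒰
  have hsmall : ∀ c > 0, ¬∀ᶠ z in 𝒰, c < arcMass μ z := fun c hc h =>
    ((hμ.eventually_lt_const hc).and h).exists.elim fun z hz => hz.1.asymm hz.2
  obtain ⟨⟨x, y⟩, -, hlim⟩ := isCompact_univ.ultrafilter_le_nhds 𝒰 (by simp)
  have hxy : x = y := by
    by_contra hne
    obtain ⟨c, hc0, hc⟩ := exists_between (arcMass_pos μ (z := (x, y)) hne)
    exact hsmall c hc0 (hlim (lowerSemicontinuous_arcMass μ _ c hc))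
  subst hxy
  refine ENNReal.tendsto_nhds_zero.2 fun ε hε => ?_
  obtain ⟨a, b, hx, hab⟩ := exists_cIoo_measure_lt ρ x hε
  have hba : 0 < μ (cIoo b a) :=
    arcMass_pos μ (z := (b, a)) (ne_of_sbtw (mem_cIoo.1 hx)).2.2
  obtain ⟨c, hc0, hc⟩ := exists_between hba
  have hnot : ∀ᶠ z in (𝒰 : Filter _), ¬c < arcMass μ z :=
    Ultrafilter.eventually_not.2 (hsmall c hc0)
  filter_upwards [hlim (eventually_mem_cIoo hx), hnot] with z hz hzc
  rcases cIoo_subset_or_cIoo_swap_subset hz.1 hz.2 with h | h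
  · exact (measure_mono h).trans hab.le
  · exact absurd (hc.trans_le (measure_mono h)) hzc

theorem tendsto_arcMass_zero_iff (μ ν : Measure (AddCircle p)) [IsFiniteMeasure μ]
    [IsFiniteMeasure ν] [NullSingletonClass μ] [NullSingletonClass ν] [μ.IsOpenPosMeasure]
    [ν.IsOpenPosMeasure] {ι : Type*} {l : Filter ι} {f : ι → AddCircle p × AddCircle p} :
    Tendsto (fun i => arcMass μ (f i)) l (𝓝 0) ↔ Tendsto (fun i => arcMass ν (f i)) l (𝓝 0) :=
  ⟨fun h => (tendsto_arcMass_comap ν μ).comp (tendsto_comap_iff.2 h),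
    fun h => (tendsto_arcMass_comap μ ν).comp (tendsto_comap_iff.2 h)⟩

variable [IsProbabilityMeasure ρ]

theorem separation_le_left (z : AddCircle p × AddCircle p) : separation ρ z ≤ arcMass ρ z :=
  mul_le_of_le_one_right' prob_le_one

theorem separation_le_right (z : AddCircle p × AddCircle p) : separation ρ z ≤ arcMass ρ z.swap :=
  mul_le_of_le_one_left' prob_le_one

variable [NullSingletonClass ρ]

theorem arcMass_add_arcMass_swap {z : AddCircle p × AddCircle p} (hz : z.1 ≠ z.2) :
    arcMass ρ z + arcMass ρ z.swap = 1 := by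
  have hpair : ρ {z.1, z.2} = 0 := (toFinite _).measure_zero ρ
  rw [arcMass, arcMass, Prod.fst_swap, Prod.snd_swap,
    ← measure_union (disjoint_cIoo_cIoo_swap _ _) (isOpen_cIoo _ _).measurableSet,
    cIoo_union_cIoo_swap hz, (prob_compl_eq_one_iff (toFinite _).measurableSet).2 hpair]

theorem continuousAt_arcMass {z : AddCircle p × AddCircle p} (hz : z.1 ≠ z.2) :
    ContinuousAt (arcMass ρ) z := by
  have hswap : LowerSemicontinuous fun w : AddCircle p × AddCircle p => arcMass ρ w.swap :=
    (lowerSemicontinuous_arcMass ρ).comp continuous_swap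
  have heq : arcMass ρ =ᶠ[𝓝 z] fun w => 1 - arcMass ρ w.swap := by
    filter_upwards [(isOpen_ne_fun continuous_fst continuous_snd).mem_nhds hz] with w hw
    exact ENNReal.eq_sub_of_add_eq (measure_ne_top _ _) (arcMass_add_arcMass_swap ρ hw)
  refine continuousAt_iff_lower_upperSemicontinuousAt.2 ⟨lowerSemicontinuous_arcMass ρ z, ?_⟩
  have hupper := (ENNReal.continuous_sub_left one_ne_top).comp_lowerSemicontinuous_antitone hswap
    fun _ _ h => tsub_le_tsub_left h 1
  intro η hη
  filter_upwards [heq, hupper z η (heq.eq_of_nhds.symm.trans_lt hη)] with w hw hwη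
  rwa [hw]

theorem continuous_separation : Continuous (separation ρ) := by
  refine continuous_iff_continuousAt.2 fun ⟨x, y⟩ => ?_
  rcases eq_or_ne x y with rfl | hxy
  · rw [ContinuousAt, separation_diag]
    refine ENNReal.tendsto_nhds_zero.2 fun ε hε => ?_
    obtain ⟨a, b, hx, hab⟩ := exists_cIoo_measure_lt ρ x hε
    filter_upwards [eventually_mem_cIoo hx] with ⟨z, w⟩ hzw
    rcases eq_or_ne z w with rfl | hne
    · simp [separation_diag]
    rcases cIoo_subset_or_cIoo_subset hzw.1 hzw.2 hne with h | h
    · exact (separation_le_left ρ _).trans ((measure_mono h).trans hab.le)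
    · exact (separation_le_right ρ _).trans ((measure_mono h).trans hab.le)
  · exact ENNReal.Tendsto.mul (continuousAt_arcMass ρ hxy) (.inr (measure_ne_top _ _))
      ((continuousAt_arcMass ρ hxy.symm).comp continuous_swap.continuousAt)
      (.inr (measure_ne_top _ _))

end ArcMass

/-! ### Nonnegative supermartingales -/

section LSupermartingale

variable {Ω ι : Type*} {m : MeasurableSpace Ω} {μ : Measure Ω} [LinearOrder ι]
  {ℱ : Filtration ι m} {f : ι → Ω → ℝ≥0∞} {s : ι} {A : Set Ω}

/-- A nonnegative supermartingale, with values in `ℝ≥0∞` and without integrability assumption: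
the defining inequality is that of the lower integrals over the sets of the filtration. -/
structure LSupermartingale (f : ι → Ω → ℝ≥0∞) (ℱ : Filtration ι m) (μ : Measure Ω) : Prop where
  measurable (i : ι) : Measurable[ℱ i] (f i)
  setLIntegral_le {i j : ι} (hij : i ≤ j) {A : Set Ω} (hA : MeasurableSet[ℱ i] A) :
    ∫⁻ ω in A, f j ω ∂μ ≤ ∫⁻ ω in A, f i ω ∂μ

namespace LSupermartingale

theorem mul_measure_inter_finset_le (hf : LSupermartingale f ℱ μ) (η : ℝ≥0∞) (F : Finset ι)
    (hs : ∀ i ∈ F, s ≤ i) (hA : MeasurableSet[ℱ s] A) :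
    η * μ (A ∩ {ω | ∃ i ∈ F, η < f i ω}) ≤ ∫⁻ ω in A, f s ω ∂μ := by
  induction F using Finset.induction_on_min generalizing s A with
  | empty => simp
  | insert a F haF ih =>
    have hsa : s ≤ a := hs a (Finset.mem_insert_self a F)
    have hAa : MeasurableSet[ℱ a] A := ℱ.mono hsa A hA
    have hB : MeasurableSet[ℱ a] {ω | η < f a ω} :=
      measurableSet_lt measurable_const (hf.measurable a)
    have hnow : η * μ (A ∩ {ω | η < f a ω}) ≤ ∫⁻ ω in A ∩ {ω | η < f a ω}, f a ω ∂μ := by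
      rw [← setLIntegral_const]
      exact setLIntegral_mono' (ℱ.le a _ (hAa.inter hB)) fun ω hω => hω.2.le
    have hlater := ih (fun i hi => (haF i hi).le) (hAa.diff hB)
    calc η * μ (A ∩ {ω | ∃ i ∈ insert a F, η < f i ω})
      _ ≤ η * μ (A ∩ {ω | η < f a ω} ∪ (A \ {ω | η < f a ω}) ∩ {ω | ∃ i ∈ F, η < f i ω}) := by
        gcongr
        rintro ω ⟨hωA, hω⟩
        by_cases h : η < f a ω
        · exact .inl ⟨hωA, h⟩
        · exact .inr ⟨⟨hωA, h⟩, by simpa [h] using hω⟩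
      _ ≤ η * μ (A ∩ {ω | η < f a ω})
          + η * μ ((A \ {ω | η < f a ω}) ∩ {ω | ∃ i ∈ F, η < f i ω}) := by
        rw [← mul_add]
        gcongr
        exact measure_union_le _ _
      _ ≤ ∫⁻ ω in A ∩ {ω | η < f a ω}, f a ω ∂μ + ∫⁻ ω in A \ {ω | η < f a ω}, f a ω ∂μ :=
        add_le_add hnow hlater
      _ = ∫⁻ ω in A, f a ω ∂μ := lintegral_inter_add_sdiff _ A (ℱ.le a _ hB)
      _ ≤ ∫⁻ ω in A, f s ω ∂μ := hf.setLIntegral_le hsa hA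

/-- Ville's maximal inequality. -/
theorem mul_measure_exists_lt_le (hf : LSupermartingale f ℱ μ) (η : ℝ≥0∞) {D : Set ι}
    (hD : D.Countable) (hs : ∀ i ∈ D, s ≤ i) :
    η * μ {ω | ∃ i ∈ D, η < f i ω} ≤ ∫⁻ ω, f s ω ∂μ := by
  classical
  have := hD.to_subtype
  let B : Finset D → Set Ω := fun F => {ω | ∃ i ∈ F.image Subtype.val, η < f i ω}
  have hB_mono : Monotone B := fun F G hFG ω ⟨i, hi, hω⟩ => ⟨i, Finset.image_mono _ hFG hi, hω⟩
  have hB_union : {ω | ∃ i ∈ D, η < f i ω} = ⋃ F, B F := by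
    ext ω
    simp only [B, mem_iUnion]
    constructor
    · rintro ⟨i, hi, hω⟩
      exact ⟨{⟨i, hi⟩}, i, by simp, hω⟩
    · rintro ⟨F, i, hi, hω⟩
      obtain ⟨j, -, rfl⟩ := Finset.mem_image.1 hi
      exact ⟨j, j.2, hω⟩
  rw [hB_union, hB_mono.directed_le.measure_iUnion, ENNReal.mul_iSup]
  refine iSup_le fun F => ?_
  have hF : ∀ i ∈ F.image Subtype.val, s ≤ i := by simpa using fun i hi _ => hs i hi
  simpa [B] using hf.mul_measure_inter_finset_le η _ hF MeasurableSet.univ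

end LSupermartingale

end LSupermartingale

section Covariance

variable {Ω : Type*} {m : MeasurableSpace Ω} {μ : Measure Ω} [IsProbabilityMeasure μ]

theorem mul_le_sq_mul_add_sq_mul {u u' a b : ℝ≥0∞} (hu : u + u' = 1) (hab : a + b = 1) :
    u * u' ≤ b ^ 2 * u + a ^ 2 * u' := by
  obtain ⟨hu_top, hu'_top⟩ := add_ne_top.1 (hu.trans_ne one_ne_top)
  obtain ⟨ha_top, hb_top⟩ := add_ne_top.1 (hab.trans_ne one_ne_top)
  lift u to NNReal using hu_top
  lift u' to NNReal using hu'_top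
  lift a to NNReal using ha_top
  lift b to NNReal using hb_top
  norm_cast at hu hab ⊢
  rw [← NNReal.coe_inj] at hu hab
  rw [← NNReal.coe_le_coe]
  push_cast at hu hab ⊢
  have hsq : (b : ℝ) ^ 2 * u + a ^ 2 * u' - u * u' = (u - a) ^ 2 := by
    rw [eq_sub_of_add_eq' hu, eq_sub_of_add_eq' hab]
    ring
  linarith [sq_nonneg ((u : ℝ) - a)]

/- `∫ U (1 - U) = a (1 - a) - Var U` with `a = ∫ U`, arranged so that no subtraction occurs. -/
theorem lintegral_mul_le_mul_lintegral_of_add_eq_one {U U' : Ω → ℝ≥0∞} (hU : Measurable U)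
    (hU' : Measurable U') (h : ∀ ω, U ω + U' ω = 1) :
    ∫⁻ ω, U ω * U' ω ∂μ ≤ (∫⁻ ω, U ω ∂μ) * ∫⁻ ω, U' ω ∂μ := by
  set a := ∫⁻ ω, U ω ∂μ
  set b := ∫⁻ ω, U' ω ∂μ
  have hab : a + b = 1 := by
    rw [← lintegral_add_left hU]
    simp [h]
  calc ∫⁻ ω, U ω * U' ω ∂μ
    _ ≤ ∫⁻ ω, (b ^ 2 * U ω + a ^ 2 * U' ω) ∂μ :=
      lintegral_mono fun ω => mul_le_sq_mul_add_sq_mul (h ω) hab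
    _ = b ^ 2 * a + a ^ 2 * b := by
      rw [lintegral_add_left (by fun_prop), lintegral_const_mul _ hU, lintegral_const_mul _ hU']
    _ = a * b * (a + b) := by ring
    _ = a * b := by rw [hab, mul_one]

end Covariance

/-! ### The two-point motion -/

theorem lintegral_comp_of_indepFun {Ω E E' : Type*} {m : MeasurableSpace Ω} {mE : MeasurableSpace E}
    {mE' : MeasurableSpace E'} {μ : Measure Ω} [IsFiniteMeasure μ] {X : Ω → E} {Y : Ω → E'}
    (hX : Measurable X) (hY : Measurable Y) (hXY : ProbabilityTheory.IndepFun X Y μ)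
    {f : E × E' → ℝ≥0∞} (hf : Measurable f) :
    ∫⁻ ω, f (X ω, Y ω) ∂μ = ∫⁻ ω, ∫⁻ ω', f (X ω, Y ω') ∂μ ∂μ := by
  have hmap := (ProbabilityTheory.indepFun_iff_map_prod_eq_prod_map_map
    hX.aemeasurable hY.aemeasurable).1 hXY
  rw [← lintegral_map hf (hX.prodMk hY), hmap, lintegral_prod _ hf.aemeasurable,
    lintegral_map hf.lintegral_prod_right' hX]
  exact lintegral_congr fun ω => lintegral_map (hf.comp measurable_prodMk_left) hY

namespace RDS

variable {Ω : Type} [m : MeasurableSpace Ω] (S : RDS Ω)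

instance : IsProbabilityMeasure S.P := S.P_prob

theorem natCast_mem_T (n : ℕ) : (n : ℝ) ∈ S.T := by
  rcases S.T_cases with h | h <;> rw [h]
  exacts [mem_range_self n, mem_Ici.2 n.cast_nonneg]

theorem nonneg_of_mem_T {t : ℝ} (ht : t ∈ S.T) : 0 ≤ t := by
  rcases S.T_cases with h | h <;> rw [h] at ht
  · obtain ⟨n, rfl⟩ := ht
    exact n.cast_nonneg
  · exact ht

theorem zero_mem_T : (0 : ℝ) ∈ S.T := by simpa using S.natCast_mem_T 0

theorem add_mem_T {s t : ℝ} (hs : s ∈ S.T) (ht : t ∈ S.T) : s + t ∈ S.T := by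
  rcases S.T_cases with h | h <;> rw [h] at hs ht ⊢
  · obtain ⟨a, rfl⟩ := hs
    obtain ⟨b, rfl⟩ := ht
    exact ⟨a + b, Nat.cast_add a b⟩
  · exact add_nonneg (mem_Ici.1 hs) (mem_Ici.1 ht)

theorem sub_mem_T {s t : ℝ} (hs : s ∈ S.T) (ht : t ∈ S.T) (hst : s ≤ t) : t - s ∈ S.T := by
  rcases S.T_cases with h | h <;> rw [h] at hs ht ⊢
  · obtain ⟨a, rfl⟩ := hs
    obtain ⟨b, rfl⟩ := ht
    exact ⟨b - a, Nat.cast_sub (Nat.cast_le.1 hst)⟩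
  · exact sub_nonneg.2 hst

/-- The filtration of the system, indexed by the time set. -/
def filtration : Filtration S.T m where
  seq t := S.F t
  mono' s t hst := S.F_mono s s.2 t t.2 hst
  le' t := S.F_le t t.2

/-- The two-point motion: the simultaneous evolution of a pair of initial conditions. -/
def pairMotion (t : ℝ) (ω : Ω) (z : UnitAddCircle × UnitAddCircle) :
    UnitAddCircle × UnitAddCircle :=
  (S.φ t ω z.1, S.φ t ω z.2)

/-- The transition operators of the two-point motion. -/
def pairTransition (t : ℝ) (g : UnitAddCircle × UnitAddCircle → ℝ≥0∞)
    (z : UnitAddCircle × UnitAddCircle) : ℝ≥0∞ :=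
  ∫⁻ ω, g (S.pairMotion t ω z) ∂S.P

variable {S} {s t : ℝ} {g : UnitAddCircle × UnitAddCircle → ℝ≥0∞}
  {z : UnitAddCircle × UnitAddCircle}

theorem pairMotion_add (hs : s ∈ S.T) (ht : t ∈ S.T) (ω : Ω) :
    S.pairMotion (s + t) ω z = S.pairMotion t (S.θ s ω) (S.pairMotion s ω z) := by
  simp [pairMotion, S.φ_cocycle s hs t ht]

theorem continuous_pairMotion (t : ℝ) (ω : Ω) : Continuous (S.pairMotion t ω) := by
  unfold pairMotion
  fun_prop

theorem measurable_pairMotion_uncurry (ht : t ∈ S.T) :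
    Measurable[(S.F t).prod inferInstance]
      fun q : Ω × (UnitAddCircle × UnitAddCircle) => S.pairMotion t q.1 q.2 := by
  have hφ := S.φ_meas t ht
  let _ : MeasurableSpace Ω := S.F t
  exact (hφ.comp (measurable_fst.prodMk measurable_snd.fst)).prodMk
    (hφ.comp (measurable_fst.prodMk measurable_snd.snd))

theorem measurable_pairMotion (ht : t ∈ S.T) (z : UnitAddCircle × UnitAddCircle) :
    Measurable[S.F t] fun ω => S.pairMotion t ω z :=
  @Measurable.comp _ _ _ (S.F t) ((S.F t).prod inferInstance) _ _ _
    (measurable_pairMotion_uncurry ht) (@measurable_prodMk_right _ _ (S.F t) _ z)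

theorem indepFun_id_shift (hs : s ∈ S.T) (ht : t ∈ S.T) :
    @ProbabilityTheory.IndepFun _ _ _ m (S.F s) (S.F t) id (S.θ s) S.P := by
  rw [@ProbabilityTheory.indepFun_iff_measure_inter_preimage_eq_mul]
  intro A B hA hB
  have hB' : MeasurableSet[⨆ r ∈ S.T, S.F r] B :=
    le_iSup₂_of_le (f := fun r (_ : r ∈ S.T) => S.F r) t ht le_rfl B hB
  rw [preimage_id, S.θ_indep s hs A B hA hB',
    (S.θ_preserving s hs).measure_preimage (S.F_le t ht B hB).nullMeasurableSet]

theorem measurable_comp_pairMotion (ht : t ∈ S.T) (hg : Measurable g)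
    (z : UnitAddCircle × UnitAddCircle) : Measurable fun ω => g (S.pairMotion t ω z) :=
  hg.comp ((measurable_pairMotion ht z).mono (S.F_le t ht) le_rfl)

theorem measurable_pairMotion_pairMotion (hs : s ∈ S.T) (ht : t ∈ S.T)
    (z : UnitAddCircle × UnitAddCircle) :
    Measurable[(S.F s).prod (S.F t)]
      fun q : Ω × Ω => S.pairMotion t q.2 (S.pairMotion s q.1 z) := by
  have h : @Measurable _ _ ((S.F s).prod (S.F t)) ((S.F t).prod inferInstance)
      fun q : Ω × Ω => (q.2, S.pairMotion s q.1 z) :=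
    @Measurable.prodMk _ ((S.F s).prod (S.F t)) _ _ (S.F t) _ _ _
      (@measurable_snd _ _ (S.F s) (S.F t))
      ((measurable_pairMotion hs z).comp (@measurable_fst _ _ (S.F s) (S.F t)))
  exact (measurable_pairMotion_uncurry ht).comp h

theorem setLIntegral_pairMotion_add (hs : s ∈ S.T) (ht : t ∈ S.T) (hg : Measurable g) {A : Set Ω}
    (hA : MeasurableSet[S.F s] A) :
    ∫⁻ ω in A, g (S.pairMotion (s + t) ω z) ∂S.P
      = ∫⁻ ω in A, S.pairTransition t g (S.pairMotion s ω z) ∂S.P := by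
  let f : Ω × Ω → ℝ≥0∞ :=
    (Prod.fst ⁻¹' A).indicator fun q => g (S.pairMotion t q.2 (S.pairMotion s q.1 z))
  have hf : Measurable[(S.F s).prod (S.F t)] f :=
    (hg.comp (measurable_pairMotion_pairMotion hs ht z)).indicator
      (@measurable_fst _ _ (S.F s) (S.F t) A hA)
  have hA' := S.F_le s hs A hA
  calc ∫⁻ ω in A, g (S.pairMotion (s + t) ω z) ∂S.P
    _ = ∫⁻ ω, f (ω, S.θ s ω) ∂S.P := by
      rw [← lintegral_indicator hA']
      simp only [pairMotion_add hs ht]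
      rfl
    _ = ∫⁻ ω, ∫⁻ ω', f (ω, S.θ s ω') ∂S.P ∂S.P :=
      lintegral_comp_of_indepFun (mE := S.F s) (mE' := S.F t)
        (measurable_id.mono (S.F_le s hs) le_rfl)
        ((S.θ_preserving s hs).measurable.mono le_rfl (S.F_le t ht)) (indepFun_id_shift hs ht) hf
    _ = ∫⁻ ω in A, S.pairTransition t g (S.pairMotion s ω z) ∂S.P := by
      rw [← lintegral_indicator hA']
      refine lintegral_congr fun ω => ?_
      by_cases hω : ω ∈ A
      · simpa [f, hω, pairTransition] using
          (S.θ_preserving s hs).lintegral_comp (measurable_comp_pairMotion ht hg _)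
      · simp [f, hω]

theorem pairTransition_add (hs : s ∈ S.T) (ht : t ∈ S.T) (hg : Measurable g) :
    S.pairTransition (s + t) g = S.pairTransition s (S.pairTransition t g) := by
  funext z
  simpa [pairTransition] using setLIntegral_pairMotion_add hs ht hg (z := z) MeasurableSet.univ

end RDS

namespace RDS

variable {Ω : Type} [m : MeasurableSpace Ω] {S : RDS Ω} {s t : ℝ}
  {g : UnitAddCircle × UnitAddCircle → ℝ≥0∞} {z : UnitAddCircle × UnitAddCircle}

theorem exists_antitone_rat_seq_tendsto (ht : t ∈ S.T) :
    ∃ u : ℕ → ℝ, Antitone u ∧ Tendsto u atTop (𝓝 t) ∧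
      ∀ n, u n ∈ S.T ∧ t ≤ u n ∧ u n ∈ range ((↑) : ℚ → ℝ) := by
  rcases S.T_cases with h | h
  · obtain ⟨k, rfl⟩ := h ▸ ht
    exact ⟨fun _ => k, antitone_const, tendsto_const_nhds, fun _ => ⟨ht, le_rfl, k, by simp⟩⟩
  · obtain ⟨u, hu_anti, hu_gt, hu_lim⟩ := Real.exists_seq_rat_strictAnti_tendsto t
    refine ⟨fun n => u n, fun _ _ h => Rat.cast_le.2 (hu_anti.antitone h), hu_lim, fun n => ?_⟩
    exact ⟨h ▸ (mem_Ici.1 (h ▸ ht)).trans (hu_gt n).le, (hu_gt n).le, mem_range_self _⟩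

theorem exists_rat_pairMotion_mem {ω : Ω} {G : Set (UnitAddCircle × UnitAddCircle)} (hG : IsOpen G)
    (ht : t ∈ S.T) (hz : S.pairMotion t ω z ∈ G) :
    ∃ r ∈ S.T, t ≤ r ∧ r ∈ range ((↑) : ℚ → ℝ) ∧ S.pairMotion r ω z ∈ G := by
  obtain ⟨u, hu_anti, hu_lim, hu⟩ := exists_antitone_rat_seq_tendsto ht
  have hφ : ∀ x, Tendsto (fun n => S.φ (u n) ω x) atTop (𝓝 (S.φ t ω x)) := fun x =>
    S.φ_cadlag_right ω t ht u (fun n => (hu n).1) hu_anti hu_lim _ x tendsto_const_nhds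
  have hlim : Tendsto (fun n => S.pairMotion (u n) ω z) atTop (𝓝 (S.pairMotion t ω z)) :=
    (hφ z.1).prodMk_nhds (hφ z.2)
  obtain ⟨n, hn⟩ := (hlim.eventually_mem (hG.mem_nhds hz)).exists
  exact ⟨u n, (hu n).1, (hu n).2.1, (hu n).2.2, hn⟩

/-- Superharmonic functions of the two-point motion. -/
def PairSuperharmonic (S : RDS Ω) (g : UnitAddCircle × UnitAddCircle → ℝ≥0∞) : Prop :=
  ∀ t ∈ S.T, S.pairTransition t g ≤ g

theorem PairSuperharmonic.lsupermartingale (hg : S.PairSuperharmonic g) (hg_meas : Measurable g)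
    (z : UnitAddCircle × UnitAddCircle) :
    LSupermartingale (fun (t : S.T) ω => g (S.pairMotion t ω z)) S.filtration S.P where
  measurable t := hg_meas.comp (measurable_pairMotion t.2 z)
  setLIntegral_le {s t} hst A hA := by
    have hsub := S.sub_mem_T s.2 t.2 hst
    calc ∫⁻ ω in A, g (S.pairMotion t ω z) ∂S.P
      _ = ∫⁻ ω in A, g (S.pairMotion (s + (t - s)) ω z) ∂S.P := by rw [add_sub_cancel]
      _ = ∫⁻ ω in A, S.pairTransition (t - s) g (S.pairMotion s ω z) ∂S.P :=
        setLIntegral_pairMotion_add s.2 hsub hg_meas hA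
      _ ≤ ∫⁻ ω in A, g (S.pairMotion s ω z) ∂S.P := lintegral_mono fun ω => hg _ hsub _

theorem PairSuperharmonic.mul_measure_exists_lt_le (hg : S.PairSuperharmonic g)
    (hg_lsc : LowerSemicontinuous g) (η : ℝ≥0∞) (hs : s ∈ S.T)
    (z : UnitAddCircle × UnitAddCircle) :
    η * S.P {ω | ∃ t ∈ S.T, s ≤ t ∧ η < g (S.pairMotion t ω z)} ≤ S.pairTransition s g z := by
  let D : Set S.T := {t | ⟨s, hs⟩ ≤ t ∧ (t : ℝ) ∈ range ((↑) : ℚ → ℝ)}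
  have hD : D.Countable :=
    ((countable_range _).preimage Subtype.val_injective).mono fun t ht => ht.2
  refine le_trans ?_ ((hg.lsupermartingale hg_lsc.measurable z).mul_measure_exists_lt_le η hD
    (s := ⟨s, hs⟩) fun t ht => ht.1)
  gcongr
  rintro ⟨t, ht, hst, hη⟩
  obtain ⟨r, hr, htr, hr_rat, hrη⟩ := exists_rat_pairMotion_mem (hg_lsc.isOpen_preimage η) ht hη
  exact ⟨⟨r, hr⟩, ⟨hst.trans htr, hr_rat⟩, hrη⟩

end RDS

namespace RDS

variable {Ω : Type} [m : MeasurableSpace Ω] {S : RDS Ω} {s t : ℝ} {ρ : Measure UnitAddCircle}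
  {z : UnitAddCircle × UnitAddCircle}

theorem pairMotion_fst_ne_snd (hz : z.1 ≠ z.2) (t : ℝ) (ω : Ω) :
    (S.pairMotion t ω z).1 ≠ (S.pairMotion t ω z).2 :=
  (S.φ t ω).injective.ne hz

theorem arcMass_pairMotion (ht : t ∈ S.T) (ω : Ω) :
    arcMass ρ (S.pairMotion t ω z) = ρ (S.φ t ω '' cIoo z.1 z.2) := by
  rw [(S.φ_orient t ht ω).image_cIoo]
  rfl

theorem ReverseStationary.pairTransition_arcMass (hρ : S.ReverseStationary ρ) (ht : t ∈ S.T) :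
    S.pairTransition t (arcMass ρ) = arcMass ρ := by
  funext z
  simp only [pairTransition, arcMass_pairMotion ht]
  exact (hρ t ht _ (isOpen_cIoo z.1 z.2).measurableSet).symm

theorem ReverseStationary.pairSuperharmonic_arcMass (hρ : S.ReverseStationary ρ) :
    S.PairSuperharmonic (arcMass ρ) := fun _ ht => (hρ.pairTransition_arcMass ht).le

variable [IsProbabilityMeasure ρ] [NullSingletonClass ρ]

theorem ReverseStationary.pairSuperharmonic_separation (hρ : S.ReverseStationary ρ) :
    S.PairSuperharmonic (separation ρ) := by
  rintro t ht ⟨x, y⟩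
  rcases eq_or_ne x y with rfl | hxy
  · simp [pairTransition, pairMotion, separation_diag]
  have hmeas := (lowerSemicontinuous_arcMass ρ).measurable
  calc S.pairTransition t (separation ρ) (x, y)
    _ ≤ S.pairTransition t (arcMass ρ) (x, y) * S.pairTransition t (arcMass ρ) (y, x) :=
      lintegral_mul_le_mul_lintegral_of_add_eq_one (measurable_comp_pairMotion ht hmeas (x, y))
        (measurable_comp_pairMotion ht hmeas (y, x))
        fun ω => arcMass_add_arcMass_swap ρ (z := S.pairMotion t ω (x, y))
          (pairMotion_fst_ne_snd hxy t ω)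
    _ = separation ρ (x, y) := by rw [hρ.pairTransition_arcMass ht, separation, Prod.swap_prod_mk]

end RDS

/-! ### The maximum principle -/

namespace RDS

variable {Ω : Type} [m : MeasurableSpace Ω] {S : RDS Ω} {s t : ℝ}
  {g : UnitAddCircle × UnitAddCircle → ℝ≥0∞} {z : UnitAddCircle × UnitAddCircle}

theorem ae_pairMotion_eq_of_forall_le {M : ℝ≥0∞} (hM : M ≠ ∞) (hgM : ∀ z, g z ≤ M)
    (hz : M ≤ S.pairTransition t g z) :
    ∀ᵐ ω ∂S.P, g (S.pairMotion t ω z) = M := by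
  have hle : (fun ω => g (S.pairMotion t ω z)) ≤ᵐ[S.P] fun _ => M := ae_of_all _ fun ω => hgM _
  have hfin : S.pairTransition t g z ≠ ∞ :=
    ((lintegral_mono_ae hle).trans_lt (by simpa using hM.lt_top)).ne
  exact ae_eq_of_ae_le_of_lintegral_le hle hfin aemeasurable_const
    (by simpa [pairTransition] using hz)

theorem Contractible.exists_measure_dist_lt_pos {x y : UnitAddCircle} (hS : S.Contractible)
    (hxy : x ≠ y) : ∃ r ∈ S.T, 0 < S.P {ω | dist (S.φ r ω x) (S.φ r ω y) < dist x y} := by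
  by_contra! hzero
  let D : Set ℝ := S.T ∩ range ((↑) : ℚ → ℝ)
  have hD : D.Countable := (countable_range _).mono inter_subset_right
  have hG : IsOpen {w : UnitAddCircle × UnitAddCircle | dist w.1 w.2 < dist x y} :=
    isOpen_lt continuous_dist continuous_const
  refine (hS x y hxy).ne' (measure_mono_null ?_ ((measure_biUnion_null_iff hD).2
    fun r hr => nonpos_iff_eq_zero.1 (hzero r hr.1)))
  rintro ω ⟨t, ht, hlt⟩
  obtain ⟨r, hr, -, hr_rat, hrlt⟩ := exists_rat_pairMotion_mem (z := (x, y)) hG ht hlt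
  exact mem_biUnion (⟨hr, hr_rat⟩ : r ∈ D) hrlt

/- The set where `w` is maximal is closed and invariant, so contractibility forces a pair of
minimal distance in it to lie on the diagonal. -/
theorem Contractible.exists_forall_le_diag (hS : S.Contractible)
    {w : UnitAddCircle × UnitAddCircle → ℝ≥0∞} (hw : UpperSemicontinuous w) (hw_top : ∀ z, w z ≠ ∞)
    (hw_sub : ∀ t ∈ S.T, w ≤ S.pairTransition t w) : ∃ x, ∀ z, w z ≤ w (x, x) := by
  obtain ⟨z₀, -, hz₀⟩ := (hw.upperSemicontinuousOn univ).exists_isMaxOn univ_nonempty isCompact_univ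
  have hmax : ∀ z, w z ≤ w z₀ := fun z => hz₀ (mem_univ z)
  have hK : IsCompact {z | w z₀ ≤ w z} := (hw.isClosed_preimage _).isCompact
  obtain ⟨⟨x, y⟩, hxyK, hmin⟩ := hK.exists_isMinOn ⟨z₀, le_refl (w z₀)⟩ continuous_dist.continuousOn
  suffices hxy : x = y by
    subst hxy
    exact ⟨x, fun z => (hmax z).trans hxyK⟩
  by_contra hxy
  obtain ⟨r, hr, hpos⟩ := hS.exists_measure_dist_lt_pos hxy
  have hinv := ae_pairMotion_eq_of_forall_le (hw_top z₀) hmax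
    (hxyK.trans (hw_sub r hr (x, y)))
  refine hpos.ne' (measure_mono_null ?_ (ae_iff.1 hinv))
  intro ω hlt hω
  have hmem : S.pairMotion r ω (x, y) ∈ {z | w z₀ ≤ w z} := hω.ge
  exact (isMinOn_iff.1 hmin _ hmem).not_gt hlt

section Continuous

variable {C : ℝ≥0∞}

theorem pairTransition_le (hgC : ∀ z, g z ≤ C) (t : ℝ) (z : UnitAddCircle × UnitAddCircle) :
    S.pairTransition t g z ≤ C :=
  (lintegral_mono fun ω => hgC _).trans (by simp)

theorem continuous_pairTransition (ht : t ∈ S.T) (hg : Continuous g) (hC : C ≠ ∞)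
    (hgC : ∀ z, g z ≤ C) : Continuous (S.pairTransition t g) :=
  continuous_iff_continuousAt.2 fun z =>
    tendsto_lintegral_filter_of_dominated_convergence (fun _ => C)
      (.of_forall fun w => measurable_comp_pairMotion ht hg.measurable w)
      (.of_forall fun w => ae_of_all _ fun ω => hgC _) (by simpa using hC)
      (ae_of_all _ fun ω => (hg.comp (continuous_pairMotion t ω)).tendsto z)

theorem PairSuperharmonic.pairTransition_anti (hg : S.PairSuperharmonic g) (hg_meas : Measurable g)
    (hs : s ∈ S.T) (ht : t ∈ S.T) (hst : s ≤ t) :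
    S.pairTransition t g ≤ S.pairTransition s g := by
  have hsub := S.sub_mem_T hs ht hst
  rw [← add_sub_cancel s t, pairTransition_add hs hsub hg_meas]
  exact fun z => lintegral_mono fun ω => hg _ hsub _

theorem PairSuperharmonic.iInf_le_pairTransition_iInf (hg : S.PairSuperharmonic g)
    (hg_cont : Continuous g) (hC : C ≠ ∞) (hgC : ∀ z, g z ≤ C) (hs : s ∈ S.T) :
    (fun z => ⨅ n : ℕ, S.pairTransition n g z) ≤
      S.pairTransition s fun z => ⨅ n : ℕ, S.pairTransition n g z := by
  have hanti := fun {s t} => hg.pairTransition_anti hg_cont.measurable (s := s) (t := t)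
  intro z
  have hexchange : S.pairTransition s (fun z => ⨅ n : ℕ, S.pairTransition n g z) z
      = ⨅ n : ℕ, S.pairTransition s (S.pairTransition n g) z := by
    refine lintegral_iInf (fun n => measurable_comp_pairMotion hs
      (continuous_pairTransition (S.natCast_mem_T n) hg_cont hC hgC).measurable z) ?_ ?_
    · exact fun n k hnk ω => hanti (S.natCast_mem_T n) (S.natCast_mem_T k) (Nat.cast_le.2 hnk) _
    · exact ne_top_of_le_ne_top hC (pairTransition_le (pairTransition_le hgC _) s z)
  rw [hexchange]
  refine le_iInf fun n => ?_
  obtain ⟨k, hk⟩ := exists_nat_ge (s + n)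
  calc ⨅ n : ℕ, S.pairTransition n g z
    _ ≤ S.pairTransition k g z := iInf_le _ k
    _ ≤ S.pairTransition (s + n) g z :=
      hanti (S.add_mem_T hs (S.natCast_mem_T n)) (S.natCast_mem_T k) hk z
    _ = S.pairTransition s (S.pairTransition n g) z := by
      rw [pairTransition_add hs (S.natCast_mem_T n) hg_cont.measurable]

theorem Contractible.iInf_pairTransition_eq_zero (hS : S.Contractible) (hg : S.PairSuperharmonic g)
    (hg_cont : Continuous g) (hC : C ≠ ∞) (hgC : ∀ z, g z ≤ C) (hg_diag : ∀ x, g (x, x) = 0)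
    (z : UnitAddCircle × UnitAddCircle) : ⨅ n : ℕ, S.pairTransition n g z = 0 := by
  obtain ⟨x, hx⟩ := hS.exists_forall_le_diag (w := fun z => ⨅ n : ℕ, S.pairTransition n g z)
    (upperSemicontinuous_iInf fun n =>
      (continuous_pairTransition (S.natCast_mem_T n) hg_cont hC hgC).upperSemicontinuous)
    (fun z => ne_top_of_le_ne_top hC ((iInf_le _ 0).trans (pairTransition_le hgC _ z)))
    (fun t ht => hg.iInf_le_pairTransition_iInf hg_cont hC hgC ht)
  refine nonpos_iff_eq_zero.1 ((hx z).trans ((iInf_le _ 0).trans ?_))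
  exact (hg _ (S.natCast_mem_T 0) (x, x)).trans (hg_diag x).le

end Continuous

end RDS

/-! ### Almost sure convergence -/

theorem tendsto_zero_of_tendsto_mul_zero {ι : Type*} {l : Filter ι} {f g : ι → ℝ≥0∞} {c : ℝ≥0∞}
    (hc : c ≠ 0) (hc_top : c ≠ ∞) (hg : ∀ᶠ i in l, c ≤ g i)
    (h : Tendsto (fun i => f i * g i) l (𝓝 0)) : Tendsto f l (𝓝 0) := by
  have hlim : Tendsto (fun i => f i * g i * c⁻¹) l (𝓝 0) := by
    simpa using ENNReal.Tendsto.mul_const h (.inr (inv_ne_top.2 hc))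
  refine tendsto_of_tendsto_of_tendsto_of_le_of_le' tendsto_const_nhds hlim
    (.of_forall fun _ => zero_le) ?_
  filter_upwards [hg] with i hi
  calc f i = f i * c * c⁻¹ := by rw [mul_assoc, ENNReal.mul_inv_cancel hc hc_top, mul_one]
    _ ≤ f i * g i * c⁻¹ := by gcongr

namespace RDS

variable {Ω : Type} [m : MeasurableSpace Ω] {S : RDS Ω}
  {g : UnitAddCircle × UnitAddCircle → ℝ≥0∞} {z : UnitAddCircle × UnitAddCircle}

instance : S.tFilter.NeBot :=
  inf_principal_neBot_iff.2 fun _ hU =>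
    have ⟨_, hn⟩ := (tendsto_natCast_atTop_atTop.eventually hU).exists
    ⟨_, hn, S.natCast_mem_T _⟩

theorem eventually_mem_T : ∀ᶠ t in S.tFilter, t ∈ S.T :=
  mem_inf_of_right (mem_principal_self _)

theorem PairSuperharmonic.ae_tendsto_zero (hg : S.PairSuperharmonic g)
    (hg_lsc : LowerSemicontinuous g) (hz : ⨅ n : ℕ, S.pairTransition n g z = 0) :
    ∀ᵐ ω ∂S.P, Tendsto (fun t => g (S.pairMotion t ω z)) S.tFilter (𝓝 0) := by
  have hnull : ∀ k : ℕ, ∀ᵐ ω ∂S.P,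
      ¬∀ n : ℕ, ∃ t ∈ S.T, n ≤ t ∧ (k : ℝ≥0∞)⁻¹ < g (S.pairMotion t ω z) := by
    intro k
    rw [ae_iff]
    simp only [not_not]
    have hmul : (k : ℝ≥0∞)⁻¹ * S.P {ω | ∀ n : ℕ, ∃ t ∈ S.T, n ≤ t ∧
        (k : ℝ≥0∞)⁻¹ < g (S.pairMotion t ω z)} ≤ ⨅ n : ℕ, S.pairTransition n g z := by
      refine le_iInf fun n => le_trans ?_
        (hg.mul_measure_exists_lt_le hg_lsc (k : ℝ≥0∞)⁻¹ (S.natCast_mem_T n) z)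
      gcongr
      exact fun hω => hω n
    rw [hz, nonpos_iff_eq_zero, mul_eq_zero] at hmul
    exact hmul.resolve_left (ENNReal.inv_ne_zero.2 (natCast_ne_top k))
  filter_upwards [ae_all_iff.2 hnull] with ω hω
  refine ENNReal.tendsto_nhds_zero.2 fun ε hε => ?_
  obtain ⟨k, hk⟩ := exists_inv_nat_lt hε.ne'
  obtain ⟨n, hn⟩ := not_forall.1 (hω k)
  refine eventually_inf_principal.2 ((eventually_ge_atTop (n : ℝ)).mono fun t hnt ht => ?_)
  by_contra! hlt
  exact hn ⟨t, ht, hnt, hk.trans hlt⟩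

theorem PairSuperharmonic.measure_forall_lt_one_exists_lt_le (hg : S.PairSuperharmonic g)
    (hg_lsc : LowerSemicontinuous g) (z : UnitAddCircle × UnitAddCircle) :
    S.P {ω | ∀ c < 1, ∃ t ∈ S.T, c < g (S.pairMotion t ω z)} ≤ g z := by
  refine ENNReal.le_of_forall_lt_one_mul_le fun c hc => ?_
  calc c * S.P {ω | ∀ c < 1, ∃ t ∈ S.T, c < g (S.pairMotion t ω z)}
    _ ≤ c * S.P {ω | ∃ t ∈ S.T, 0 ≤ t ∧ c < g (S.pairMotion t ω z)} := by
      gcongr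
      intro hω
      obtain ⟨t, ht, hlt⟩ := hω c hc
      exact ⟨t, ht, S.nonneg_of_mem_T ht, hlt⟩
    _ ≤ S.pairTransition 0 g z := hg.mul_measure_exists_lt_le hg_lsc c S.zero_mem_T z
    _ ≤ g z := hg 0 S.zero_mem_T z

section ArcMass

variable {ρ : Measure UnitAddCircle} [IsProbabilityMeasure ρ] [NullSingletonClass ρ]

theorem Contractible.ae_tendsto_separation (hS : S.Contractible) (hρ : S.ReverseStationary ρ)
    (z : UnitAddCircle × UnitAddCircle) :
    ∀ᵐ ω ∂S.P, Tendsto (fun t => separation ρ (S.pairMotion t ω z)) S.tFilter (𝓝 0) :=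
  have hcont := continuous_separation ρ
  hρ.pairSuperharmonic_separation.ae_tendsto_zero hcont.lowerSemicontinuous
    (hS.iInf_pairTransition_eq_zero hρ.pairSuperharmonic_separation hcont one_ne_top
      (fun z => (separation_le_left ρ z).trans prob_le_one) (separation_diag ρ) z)

theorem exists_lt_arcMass_swap_of_tendsto (hz : z.1 ≠ z.2) {ω : Ω}
    (h : Tendsto (fun t => arcMass ρ (S.pairMotion t ω z)) S.tFilter (𝓝 0)) {c : ℝ≥0∞}
    (hc : c < 1) : ∃ t ∈ S.T, c < arcMass ρ (S.pairMotion t ω z.swap) := by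
  obtain ⟨t, ht, hlt⟩ :=
    (eventually_mem_T.and (h.eventually_lt_const (tsub_pos_of_lt hc))).exists
  have hsum := arcMass_add_arcMass_swap ρ (z := S.pairMotion t ω z) (pairMotion_fst_ne_snd hz t ω)
  refine ⟨t, ht, lt_of_add_lt_add_left (a := arcMass ρ (S.pairMotion t ω z)) ?_⟩
  exact (lt_tsub_iff_right.1 hlt).trans_eq hsum.symm

theorem exists_lt_arcMass_of_not_tendsto (hz : z.1 ≠ z.2) {ω : Ω}
    (hsep : Tendsto (fun t => separation ρ (S.pairMotion t ω z)) S.tFilter (𝓝 0))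
    (h : ¬Tendsto (fun t => arcMass ρ (S.pairMotion t ω z)) S.tFilter (𝓝 0)) {c : ℝ≥0∞}
    (hc : c < 1) : ∃ t ∈ S.T, c < arcMass ρ (S.pairMotion t ω z) := by
  by_contra! hle
  refine h (tendsto_zero_of_tendsto_mul_zero (tsub_pos_of_lt hc).ne' (by finiteness) ?_ hsep)
  filter_upwards [eventually_mem_T] with t ht
  have hsum := arcMass_add_arcMass_swap ρ (z := S.pairMotion t ω z) (pairMotion_fst_ne_snd hz t ω)
  rw [← hsum, tsub_le_iff_left]
  gcongr
  exact hle t ht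

theorem Contractible.measure_tendsto_arcMass (hS : S.Contractible) (hρ : S.ReverseStationary ρ)
    (hz : z.1 ≠ z.2) :
    S.P {ω | Tendsto (fun t => arcMass ρ (S.pairMotion t ω z)) S.tFilter (𝓝 0)}
      = 1 - arcMass ρ z := by
  set E := {ω | Tendsto (fun t => arcMass ρ (S.pairMotion t ω z)) S.tFilter (𝓝 0)}
  have hville := hρ.pairSuperharmonic_arcMass.measure_forall_lt_one_exists_lt_le
    (lowerSemicontinuous_arcMass ρ)
  refine le_antisymm ?_ (tsub_le_iff_right.2 ?_)
  · calc S.P E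
      _ ≤ S.P {ω | ∀ c < 1, ∃ t ∈ S.T, c < arcMass ρ (S.pairMotion t ω z.swap)} :=
        measure_mono fun ω hω c => exists_lt_arcMass_swap_of_tendsto hz hω
      _ ≤ arcMass ρ z.swap := hville z.swap
      _ = 1 - arcMass ρ z :=
        ENNReal.eq_sub_of_add_eq' one_ne_top (by rw [add_comm, arcMass_add_arcMass_swap ρ hz])
  · calc 1
      _ = S.P univ := measure_univ.symm
      _ ≤ S.P (E ∪ {ω | ∀ c < 1, ∃ t ∈ S.T, c < arcMass ρ (S.pairMotion t ω z)}) := by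
        refine measure_mono_ae ?_
        filter_upwards [hS.ae_tendsto_separation hρ z] with ω hω _
        exact or_iff_not_imp_left.2 fun h c => exists_lt_arcMass_of_not_tendsto hz hω h
      _ ≤ S.P E + arcMass ρ z := (measure_union_le _ _).trans (add_le_add_right (hville z) _)

end ArcMass

end RDS

section AddCircle

variable {p : ℝ}

theorem measure_image_eq_of_subset_coe_Icc {Y : Type*} [MeasurableSpace Y] (μ : Measure Y)
    [NullSingletonClass μ] (f : AddCircle p → Y) {a b : ℝ} {J : Set (AddCircle p)}
    (hIJ : (↑) '' Ioo a b ⊆ J) (hJI : J ⊆ (↑) '' Icc a b) :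
    μ (f '' J) = μ (f '' ((↑) '' Ioo a b)) := by
  have hIcc : Icc a b ⊆ Ioo a b ∪ {a, b} := fun x hx => by
    rcases eq_endpoints_or_mem_Ioo_of_mem_Icc hx with rfl | rfl | h
    exacts [.inr (.inl rfl), .inr (.inr rfl), .inl h]
  refine le_antisymm ?_ (measure_mono (image_mono hIJ))
  calc μ (f '' J)
    _ ≤ μ (f '' ((↑) '' Ioo a b) ∪ f '' ((↑) '' {a, b})) := by
      rw [← image_union, ← image_union]
      exact measure_mono (image_mono (hJI.trans (image_mono hIcc)))
    _ ≤ μ (f '' ((↑) '' Ioo a b)) + μ (f '' ((↑) '' {a, b})) := measure_union_le _ _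
    _ = μ (f '' ((↑) '' Ioo a b)) := by
      rw [(((toFinite {a, b}).image _).image f).measure_zero μ, add_zero]

end AddCircle

instance : IsProbabilityMeasure (volume : Measure UnitAddCircle) :=
  ⟨UnitAddCircle.measure_univ⟩

instance : NullSingletonClass (volume : Measure UnitAddCircle) :=
  ⟨fun x => by simpa using AddCircle.volume_closedBall (1 : ℝ) (x := x) 0⟩

namespace RDS

variable {Ω : Type} [m : MeasurableSpace Ω] {S : RDS Ω} {ρ : Measure UnitAddCircle}
  [IsProbabilityMeasure ρ] [NullSingletonClass ρ] [ρ.IsOpenPosMeasure]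

theorem Contractible.measure_tendsto_volume_image_cIoo (hS : S.Contractible)
    (hρ : S.ReverseStationary ρ) {x y : UnitAddCircle} (hxy : x ≠ y) :
    S.P {ω | Tendsto (fun t => volume (S.φ t ω '' cIoo x y)) S.tFilter (𝓝 0)}
      = 1 - ρ (cIoo x y) := by
  refine Eq.trans ?_ (hS.measure_tendsto_arcMass hρ (z := (x, y)) hxy)
  congr 1 with ω
  have hvol : (fun t => volume (S.φ t ω '' cIoo x y)) =ᶠ[S.tFilter]
      fun t => arcMass volume (S.pairMotion t ω (x, y)) :=
    eventually_mem_T.mono fun t ht => (arcMass_pairMotion (z := (x, y)) ht ω).symm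
  exact (tendsto_congr' hvol).trans (tendsto_arcMass_zero_iff volume ρ)

theorem Contractible.measure_tendsto_volume_image_coe_Ioo (hS : S.Contractible)
    (hρ : S.ReverseStationary ρ) {a b : ℝ} (hab : a ≤ b) (hba : b ≤ a + 1) :
    S.P {ω | Tendsto (fun t => volume (S.φ t ω '' ((↑) '' Ioo a b))) S.tFilter (𝓝 0)}
      = 1 - ρ ((↑) '' Ioo a b) := by
  rcases hab.eq_or_lt with rfl | hab'
  · simp
  rcases hba.eq_or_lt with rfl | hba'
  · have hfull (μ : Measure UnitAddCircle) [IsProbabilityMeasure μ] [NullSingletonClass μ]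
        (f : UnitAddCircle ≃ₜ UnitAddCircle) : μ (f '' ((↑) '' Ioo a (a + 1))) = 1 := by
      rw [← measure_image_eq_of_subset_coe_Icc μ f (subset_univ _)
        (AddCircle.coe_image_Icc_eq (1 : ℝ) a).superset, image_univ, f.range_coe, measure_univ]
    have hρ_full := hfull ρ (.refl _)
    simp_all [tendsto_const_nhds_iff]
  · rw [image_coe_Ioo hab hba']
    refine hS.measure_tendsto_volume_image_cIoo hρ fun h => hab'.ne ?_
    exact (AddCircle.coe_eq_coe_iff_of_mem_Ico (a := a) ⟨le_rfl, by linarith⟩ ⟨hab, hba'⟩).1 h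

end RDS

/-- under the hypotheses of Lemma 3.3, for any connected `J ⊆ 𝕊¹`,
`ℙ(ω : l(φ(t,ω)J) → 0) = 1 - ρ(J)`. -/
theorem prob_length_tendsto_zero_eq_one_sub_rho
    {Ω : Type} [MeasurableSpace Ω] (S : RDS Ω) (h : S.Contractible)
    (ρ : Measure UnitAddCircle) [IsProbabilityMeasure ρ]
    (hatomless : Atomless ρ) (hfull : FullSupport ρ) (hstat : S.ReverseStationary ρ)
    (J : Set UnitAddCircle) (hJ : IsPreconnected J) :
    S.P {ω | Tendsto (fun t => volume (⇑(S.φ t ω) '' J)) S.tFilter (𝓝 0)} = 1 - ρ J := by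
  have : NullSingletonClass ρ := ⟨hatomless⟩
  have : ρ.IsOpenPosMeasure := ⟨fun U hU hne => (hfull U hU hne).ne'⟩
  obtain ⟨a, b, ⟨hab, hba⟩, hIJ, hJI⟩ := exists_lift_of_isPreconnected hJ
  have hρJ : ρ J = ρ ((↑) '' Ioo a b) := by
    simpa using measure_image_eq_of_subset_coe_Icc ρ id hIJ hJI
  simp only [hρJ, measure_image_eq_of_subset_coe_Icc volume _ hIJ hJI]
  exact h.measure_tendsto_volume_image_coe_Ioo hstat hab hba
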